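/- arXiv:2212.11225 — 4 statements merged into one kernel-verified Lean document; each statement's English description precedes it below -/
import Mathlib

section
/- Let I ∈ Ins(Ω,H,K) and J ∈ Ins(Λ,H,V) be two instruments such that the Lüders instruments I^{A^I} and I^{A^J} of their induced POVMs are compatible. Then I and J are compatible. -/
open scoped Kronecker ComplexOrder
open Matrix

noncomputable section

/-- The positive semidefinite square root of a positive semidefinite matrix
(the definition of the older Mathlib, since removed there). -/
def Matrix.PosSemidef.sqrt {n 𝕜 : Type*} [Fintype n] [RCLike 𝕜] [DecidableEq n]
    {A : Matrix n n 𝕜} (hA : A.PosSemidef) : Matrix n n 𝕜 :=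
  hA.1.eigenvectorUnitary.1 * diagonal ((↑) ∘ Real.sqrt ∘ hA.1.eigenvalues) *
  (star hA.1.eigenvectorUnitary : Matrix n n 𝕜)

/-- Linear maps between matrix algebras, representing super-operators
`L(H) → L(K)` for finite-dimensional Hilbert spaces with index types `dH`, `dK`. -/
abbrev MatMap (dH dK : Type) : Type := Matrix dH dH ℂ →ₗ[ℂ] Matrix dK dK ℂ

variable {Ω Λ dH dK dV dA dA' : Type}

/-- The Choi matrix of a super-operator. -/
def choiMatrix [DecidableEq dH] (Φ : MatMap dH dK) : Matrix (dH × dK) (dH × dK) ℂ :=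
  fun p q => Φ (Matrix.single p.1 q.1 1) p.2 q.2

/-- Complete positivity of a super-operator (positivity of its Choi matrix). -/
def IsCP [Fintype dH] [DecidableEq dH] [Fintype dK] (Φ : MatMap dH dK) : Prop :=
  (choiMatrix Φ).PosSemidef

/-- A quantum state: a positive semidefinite matrix of unit trace. -/
def IsState [Fintype dH] (ρ : Matrix dH dH ℂ) : Prop := ρ.PosSemidef ∧ ρ.trace = 1

/-- Trace-nonincreasing super-operator. -/
def IsTNI [Fintype dH] [Fintype dK] (Φ : MatMap dH dK) : Prop :=
  ∀ ρ : Matrix dH dH ℂ, ρ.PosSemidef → (Φ ρ).trace ≤ ρ.trace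

/-- Trace-preserving super-operator. -/
def IsTP [Fintype dH] [Fintype dK] (Φ : MatMap dH dK) : Prop :=
  ∀ ρ : Matrix dH dH ℂ, (Φ ρ).trace = ρ.trace

/-- A quantum instrument with outcome set `Ω` from system `dH` to system `dK`:
a family of completely positive trace-nonincreasing maps summing to a channel. -/
structure Instrument (Ω dH dK : Type) [Fintype Ω] [Fintype dH] [DecidableEq dH]
    [Fintype dK] : Type where
  op : Ω → MatMap dH dK
  cp : ∀ x, IsCP (op x)
  tni : ∀ x, IsTNI (op x)
  tp : IsTP (∑ x, op x)

/-- A quantum channel: a completely positive trace-preserving super-operator. -/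
structure Channel (dH dK : Type) [Fintype dH] [DecidableEq dH] [Fintype dK] : Type where
  map : MatMap dH dK
  cp : IsCP map
  tp : IsTP map

/-- A POVM with outcome set `Ω` on system `d`. -/
structure POVM (Ω d : Type) [Fintype Ω] [Fintype d] [DecidableEq d] : Type where
  elem : Ω → Matrix d d ℂ
  pos : ∀ x, (elem x).PosSemidef
  sum_eq : ∑ x, elem x = 1

/-- The effect (induced POVM element) of an operation `Φ`:
the unique matrix `A` with `tr[A ρ] = tr[Φ ρ]` for all `ρ`. -/
def dualId [Fintype dH] [DecidableEq dH] [Fintype dK] (Φ : MatMap dH dK) :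
    Matrix dH dH ℂ :=
  fun i j => (Φ (Matrix.single j i 1)).trace

/-- Partial trace over the first tensor factor. -/
def ptraceL [Fintype dA] (M : Matrix (dA × dK) (dA × dK) ℂ) : Matrix dK dK ℂ :=
  fun i j => ∑ a, M (a, i) (a, j)

/-- Partial trace over the second tensor factor. -/
def ptraceR [Fintype dV] (M : Matrix (dK × dV) (dK × dV) ℂ) : Matrix dK dK ℂ :=
  fun i j => ∑ b, M (i, b) (j, b)

/-- Compatibility of two instruments: existence of a joint instrument whose
partial-trace marginals (summed over the other outcome) reproduce both instruments
on all states. -/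
def InsCompatible [Fintype Ω] [Fintype Λ] [Fintype dH] [DecidableEq dH] [Fintype dK]
    [Fintype dV] (I : Instrument Ω dH dK) (J : Instrument Λ dH dV) : Prop :=
  ∃ G : Instrument (Ω × Λ) dH (dK × dV),
    (∀ y, ∀ ρ : Matrix dH dH ℂ, IsState ρ → ∑ x, ptraceL (G.op (x, y) ρ) = J.op y ρ) ∧
    (∀ x, ∀ ρ : Matrix dH dH ℂ, IsState ρ → ∑ y, ptraceR (G.op (x, y) ρ) = I.op x ρ)

/-- Compatibility of an instrument and a channel (a one-outcome instrument). -/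
def InsChCompatible [Fintype Ω] [Fintype dH] [DecidableEq dH] [Fintype dK] [Fintype dV]
    (I : Instrument Ω dH dK) (Ψ : Channel dH dV) : Prop :=
  ∃ G : Instrument Ω dH (dK × dV),
    (∀ ρ : Matrix dH dH ℂ, IsState ρ → ∑ x, ptraceL (G.op x ρ) = Ψ.map ρ) ∧
    (∀ x, ∀ ρ : Matrix dH dH ℂ, IsState ρ → ptraceR (G.op x ρ) = I.op x ρ)

/-- Compatibility of two channels. -/
def ChCompatible [Fintype dH] [DecidableEq dH] [Fintype dK] [Fintype dV]
    (Φ : Channel dH dK) (Ψ : Channel dH dV) : Prop :=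
  ∃ Γ : Channel dH (dK × dV),
    (∀ ρ : Matrix dH dH ℂ, IsState ρ → ptraceL (Γ.map ρ) = Ψ.map ρ) ∧
    (∀ ρ : Matrix dH dH ℂ, IsState ρ → ptraceR (Γ.map ρ) = Φ.map ρ)

/-- Compatibility of a POVM and an instrument: existence of a joint instrument `G`
with `∑ x, G.op (x, y) = J.op y` and whose induced POVM has the POVM `A` as a margin. -/
def POVMInsCompatible [Fintype Ω] [Fintype Λ] [Fintype dH] [DecidableEq dH] [Fintype dK]
    (A : POVM Ω dH) (J : Instrument Λ dH dK) : Prop :=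
  ∃ G : Instrument (Ω × Λ) dH dK,
    (∀ y, ∑ x, G.op (x, y) = J.op y) ∧
    (∀ x, ∑ y, dualId (G.op (x, y)) = A.elem x)

/-- Compatibility (joint measurability) of two POVMs. -/
def POVMCompatible [Fintype Ω] [Fintype Λ] [Fintype dH] [DecidableEq dH]
    (A : POVM Ω dH) (B : POVM Λ dH) : Prop :=
  ∃ G : POVM (Ω × Λ) dH,
    (∀ y, ∑ x, G.elem (x, y) = B.elem y) ∧
    (∀ x, ∑ y, G.elem (x, y) = A.elem x)

/-- Compatibility of a POVM and a channel: existence of an instrument implementing both. -/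
def POVMChCompatible [Fintype Ω] [Fintype dH] [DecidableEq dH] [Fintype dK]
    (A : POVM Ω dH) (Ψ : Channel dH dK) : Prop :=
  ∃ G : Instrument Ω dH dK,
    (∑ x, G.op x) = Ψ.map ∧ ∀ x, dualId (G.op x) = A.elem x

/-- Instrument postprocessing: `I ⪯ J` if `I_x = ∑ y, R^(y)_x ∘ J_y` for
a family of instruments `R^(y)`. -/
def Postprocessed [Fintype Ω] [Fintype Λ] [Fintype dH] [DecidableEq dH] [Fintype dK]
    [Fintype dV] [DecidableEq dV] (I : Instrument Ω dH dK) (J : Instrument Λ dH dV) : Prop :=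
  ∃ R : Λ → Instrument Ω dV dK, ∀ x, I.op x = ∑ y, (R y).op x ∘ₗ J.op y

/-- An instrument `I` does not disturb an instrument `J`: `J_y ∘ Φ^I = J_y`. -/
def NonDisturbs [Fintype Ω] [Fintype Λ] [Fintype dH] [DecidableEq dH] [Fintype dV]
    (I : Instrument Ω dH dH) (J : Instrument Λ dH dV) : Prop :=
  ∀ y, J.op y ∘ₗ (∑ x, I.op x) = J.op y

/-- An instrument `I` does not disturb a channel `Ψ`: `Ψ ∘ Φ^I = Ψ`. -/
def InsNonDisturbsCh [Fintype Ω] [Fintype dH] [DecidableEq dH] [Fintype dV]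
    (I : Instrument Ω dH dH) (Ψ : Channel dH dV) : Prop :=
  Ψ.map ∘ₗ (∑ x, I.op x) = Ψ.map

/-- An instrument `I` does not disturb a POVM `A`:
the statistics of `A` are unchanged by the channel induced by `I`. -/
def InsNonDisturbsPOVM [Fintype Ω] [Fintype Λ] [Fintype dH] [DecidableEq dH]
    (I : Instrument Ω dH dH) (A : POVM Λ dH) : Prop :=
  ∀ y, ∀ ρ : Matrix dH dH ℂ,
    (A.elem y * ((∑ x, I.op x) ρ)).trace = (A.elem y * ρ).trace

/-- A POVM `A` does not disturb an instrument `J`: some instrument measuring `A`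
does not disturb `J`. -/
def POVMNonDisturbs [Fintype Ω] [Fintype Λ] [Fintype dH] [DecidableEq dH] [Fintype dV]
    (A : POVM Ω dH) (J : Instrument Λ dH dV) : Prop :=
  ∃ I : Instrument Ω dH dH, (∀ x, dualId (I.op x) = A.elem x) ∧ NonDisturbs I J

/-- A POVM `A` does not disturb a channel `Ψ`. -/
def POVMNonDisturbsCh [Fintype Ω] [Fintype dH] [DecidableEq dH] [Fintype dV]
    (A : POVM Ω dH) (Ψ : Channel dH dV) : Prop :=
  ∃ I : Instrument Ω dH dH, (∀ x, dualId (I.op x) = A.elem x) ∧ InsNonDisturbsCh I Ψ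

/-- A POVM `A` does not disturb a POVM `B`. -/
def POVMNonDisturbsPOVM [Fintype Ω] [Fintype Λ] [Fintype dH] [DecidableEq dH]
    (A : POVM Ω dH) (B : POVM Λ dH) : Prop :=
  ∃ I : Instrument Ω dH dH, (∀ x, dualId (I.op x) = A.elem x) ∧ InsNonDisturbsPOVM I B

/-- A sharp (projection-valued) POVM. -/
def IsSharp [Fintype Ω] [Fintype dH] [DecidableEq dH] (A : POVM Ω dH) : Prop :=
  ∀ x, A.elem x * A.elem x = A.elem x

/-- `(H_A, W, E)` is a dilation of the instrument `I`:
`W` is an isometry `H → H_A ⊗ K` and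
`I_x(ρ) = Tr_{H_A}[W ρ W* (E(x) ⊗ 1_K)]` on all states. -/
def IsDilation [Fintype Ω] [Fintype dH] [DecidableEq dH] [Fintype dK] [DecidableEq dK]
    [Fintype dA] [DecidableEq dA] (I : Instrument Ω dH dK)
    (W : Matrix (dA × dK) dH ℂ) (E : POVM Ω dA) : Prop :=
  Wᴴ * W = 1 ∧
  ∀ x, ∀ ρ : Matrix dH dH ℂ, IsState ρ →
    I.op x ρ = ptraceL (W * ρ * Wᴴ * (E.elem x ⊗ₖ (1 : Matrix dK dK ℂ)))

/-- Minimality of a Stinespring isometry `W : H → H_A ⊗ K`: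
the span of `{(1 ⊗ B) W φ}` is everything. -/
def IsMinimalW [Fintype dH] [Fintype dK] [DecidableEq dK] [Fintype dA] [DecidableEq dA]
    (W : Matrix (dA × dK) dH ℂ) : Prop :=
  Submodule.span ℂ {v : (dA × dK) → ℂ |
    ∃ (B : Matrix dK dK ℂ) (φ : dH → ℂ),
      v = ((1 : Matrix dA dA ℂ) ⊗ₖ B) *ᵥ (W *ᵥ φ)} = ⊤

/-- `IC` is the complementary instrument of the instrument dilated by `(W, E)`:
`IC_x(ρ) = Tr_K[(√E(x) ⊗ 1) W ρ W* (√E(x) ⊗ 1)]`. -/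
def IsComplementaryOf [Fintype Ω] [Fintype dH] [DecidableEq dH] [Fintype dK]
    [DecidableEq dK] [Fintype dA] [DecidableEq dA] (W : Matrix (dA × dK) dH ℂ) (E : POVM Ω dA)
    (IC : Instrument Ω dH dA) : Prop :=
  ∀ x, ∀ ρ : Matrix dH dH ℂ,
    IC.op x ρ =
      ptraceR (((E.pos x).sqrt ⊗ₖ (1 : Matrix dK dK ℂ)) * (W * ρ * Wᴴ) *
        ((E.pos x).sqrt ⊗ₖ (1 : Matrix dK dK ℂ)))

/-- A measure-and-prepare instrument: `I_x(ρ) = tr[A(x) ρ] ξ_x`. -/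
def IsMeasureAndPrepare [Fintype Ω] [Fintype dH] [DecidableEq dH] [Fintype dK]
    [DecidableEq dK] (I : Instrument Ω dH dK) : Prop :=
  ∃ (A : POVM Ω dH) (ξ : Ω → Matrix dK dK ℂ),
    (∀ x, IsState (ξ x)) ∧
    ∀ x, ∀ ρ : Matrix dH dH ℂ, I.op x ρ = ((A.elem x * ρ).trace) • ξ x

/-- A pure state: a state which is a (rank-one) projection. -/
def IsPureState [Fintype dK] (ρ : Matrix dK dK ℂ) : Prop :=
  IsState ρ ∧ ρ * ρ = ρ

/-- A rank-1 POVM: every effect has rank at most one. -/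
def IsRankOnePOVM [Fintype Ω] [Fintype dH] [DecidableEq dH] (A : POVM Ω dH) : Prop :=
  ∀ x, (A.elem x).rank ≤ 1

/-- POVM postprocessing: `B(y) = ∑ x, ν x y • A(x)` for a stochastic matrix `ν`. -/
def POVMPostprocessed [Fintype Ω] [Fintype Λ] [Fintype dH] [DecidableEq dH]
    (B : POVM Λ dH) (A : POVM Ω dH) : Prop :=
  ∃ ν : Ω → Λ → ℝ, (∀ x y, 0 ≤ ν x y) ∧ (∀ x, ∑ y, ν x y = 1) ∧
    ∀ y, B.elem y = ∑ x, (ν x y : ℂ) • A.elem x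

/-- A measure-and-prepare instrument preparing pure states. -/
def IsMeasureAndPreparePure [Fintype Ω] [Fintype dH] [DecidableEq dH] [Fintype dK]
    [DecidableEq dK] (I : Instrument Ω dH dK) : Prop :=
  ∃ (A : POVM Ω dH) (ξ : Ω → Matrix dK dK ℂ),
    (∀ x, IsPureState (ξ x)) ∧
    ∀ x, ∀ ρ : Matrix dH dH ℂ, I.op x ρ = ((A.elem x * ρ).trace) • ξ x

/-- Pseudo-inverse `T` of the square root and the projection `P` onto its kernel. -/
lemma sqrt_pinv {n : Type} [Fintype n] [DecidableEq n] {A : Matrix n n ℂ}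
    (hA : A.PosSemidef) : ∃ T P : Matrix n n ℂ,
      hA.sqrtᴴ = hA.sqrt ∧ Tᴴ = T ∧ Pᴴ = P ∧ hA.sqrt * hA.sqrt = A ∧ P * P = P ∧
      hA.sqrt * T + P = 1 ∧ T * hA.sqrt + P = 1 ∧ P * hA.sqrt = 0 ∧ hA.sqrt * P = 0 := by
  obtain ⟨U, hU⟩ : ∃ U : Matrix n n ℂ, U = hA.1.eigenvectorUnitary.1 := ⟨_, rfl⟩
  have h1 : Uᴴ * U = 1 := by
    rw [hU]; exact Unitary.coe_star_mul_self hA.1.eigenvectorUnitary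
  have h2 : U * Uᴴ = 1 := by
    rw [hU]; exact Unitary.coe_mul_star_self hA.1.eigenvectorUnitary
  have hS : hA.sqrt = U * diagonal (fun i => ((Real.sqrt (hA.1.eigenvalues i) : ℝ) : ℂ)) * Uᴴ := by
    rw [hU]; rfl
  have hAA : A = U * diagonal (fun i => ((hA.1.eigenvalues i : ℝ) : ℂ)) * Uᴴ := by
    rw [hU]; exact hA.1.spectral_theorem
  have hnn := hA.eigenvalues_nonneg
  have mulD : ∀ d e : n → ℂ, (U * diagonal d * Uᴴ) * (U * diagonal e * Uᴴ)
      = U * diagonal (fun i => d i * e i) * Uᴴ := by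
    intro d e
    calc _ = U * diagonal d * (Uᴴ * U) * diagonal e * Uᴴ := by simp only [Matrix.mul_assoc]
      _ = _ := by rw [h1, Matrix.mul_one, Matrix.mul_assoc U, diagonal_mul_diagonal]
  have addD : ∀ d e : n → ℂ, (U * diagonal d * Uᴴ) + (U * diagonal e * Uᴴ)
      = U * diagonal (fun i => d i + e i) * Uᴴ := by
    intro d e
    rw [← Matrix.add_mul, ← Matrix.mul_add, diagonal_add]
  have stD : ∀ d : n → ℝ, (U * diagonal (fun i => (d i : ℂ)) * Uᴴ)ᴴ
      = U * diagonal (fun i => (d i : ℂ)) * Uᴴ := by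
    intro d
    rw [conjTranspose_mul, conjTranspose_mul, conjTranspose_conjTranspose,
      diagonal_conjTranspose, Matrix.mul_assoc]
    congr 3
    ext i
    simp
  have oneD : U * diagonal (fun _ => (1 : ℂ)) * Uᴴ = 1 := by
    rw [diagonal_one, Matrix.mul_one, h2]
  have zeroD : U * diagonal (fun _ => (0 : ℂ)) * Uᴴ = 0 := by
    rw [diagonal_zero, Matrix.mul_zero, Matrix.zero_mul]
  have key : ∀ i, ((Real.sqrt (hA.1.eigenvalues i) : ℝ) : ℂ) *
      (((Real.sqrt (hA.1.eigenvalues i))⁻¹ : ℝ) : ℂ) +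
      ((if Real.sqrt (hA.1.eigenvalues i) = 0 then (1 : ℝ) else 0 : ℝ) : ℂ) = 1 := by
    intro i
    split_ifs with h
    · simp [h]
    · rw [← Complex.ofReal_mul, mul_inv_cancel₀ h]; simp
  have key0 : ∀ i, ((Real.sqrt (hA.1.eigenvalues i) : ℝ) : ℂ) *
      ((if Real.sqrt (hA.1.eigenvalues i) = 0 then (1 : ℝ) else 0 : ℝ) : ℂ) = 0 := by
    intro i
    split_ifs with h
    · simp [h]
    · simp
  refine ⟨U * diagonal (fun i => (((Real.sqrt (hA.1.eigenvalues i))⁻¹ : ℝ) : ℂ)) * Uᴴ,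
    U * diagonal (fun i => ((if Real.sqrt (hA.1.eigenvalues i) = 0 then (1 : ℝ) else 0 : ℝ) : ℂ)) * Uᴴ,
    ?_, stD _, stD _, ?_, ?_, ?_, ?_, ?_, ?_⟩
  · rw [hS]; exact stD _
  · rw [hS, mulD]
    conv_rhs => rw [hAA]
    congr 3
    ext i
    rw [← Complex.ofReal_mul, Real.mul_self_sqrt (hnn i)]
  · rw [mulD]
    congr 3
    ext i
    split_ifs <;> simp
  · rw [hS, mulD, addD, ← oneD]
    congr 3
    ext i
    exact key i
  · rw [hS, mulD, addD, ← oneD]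
    congr 3
    ext i
    rw [mul_comm]
    exact key i
  · rw [hS, mulD, ← zeroD]
    congr 3
    ext i
    rw [mul_comm]
    exact key0 i
  · rw [hS, mulD, ← zeroD]
    congr 3
    ext i
    exact key0 i

/-- The map with Kraus operators `E k`. -/
def krausMap {κ m n : Type} [Fintype κ] [Fintype n] (E : κ → Matrix m n ℂ) : MatMap n m where
  toFun ρ := ∑ k, E k * ρ * (E k)ᴴ
  map_add' a b := by
    simp only [Matrix.mul_add, Matrix.add_mul, Finset.sum_add_distrib]
  map_smul' c a := by
    simp only [Matrix.mul_smul, Matrix.smul_mul, Finset.smul_sum, RingHom.id_apply]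

lemma krausMap_apply {κ m n : Type} [Fintype κ] [Fintype n] (E : κ → Matrix m n ℂ)
    (ρ : Matrix n n ℂ) : krausMap E ρ = ∑ k, E k * ρ * (E k)ᴴ := rfl

lemma mul_single_mul_apply {m n : Type} [Fintype n] [DecidableEq n] (E F : Matrix m n ℂ)
    (i j : n) (a b : m) : (E * Matrix.single i j (1 : ℂ) * Fᴴ) a b = E a i * star (F b j) := by
  rw [Matrix.mul_assoc, Matrix.mul_apply]
  rw [Finset.sum_eq_single i]
  · simp [conjTranspose_apply]
  · intro c _ hc
    rw [Matrix.single_mul_apply_of_ne _ _ _ _ _ hc, mul_zero]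
  · simp

lemma krausMap_cp {κ m n : Type} [Fintype κ] [Fintype n] [DecidableEq n] [Fintype m]
    (E : κ → Matrix m n ℂ) : IsCP (krausMap E) := by
  have : choiMatrix (krausMap E) = ∑ k, vecMulVec (fun p : n × m => E k p.2 p.1)
      (star (fun p : n × m => E k p.2 p.1)) := by
    ext p q
    simp only [choiMatrix, krausMap_apply, Matrix.sum_apply, mul_single_mul_apply, vecMulVec_apply,
      Pi.star_apply]
  unfold IsCP
  rw [this]
  exact posSemidef_sum _ fun k _ => posSemidef_vecMulVec_self_star _

lemma exists_kraus {m n : Type} [Fintype n] [DecidableEq n] [Fintype m]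
    (Φ : MatMap n m) (h : IsCP Φ) :
    ∃ E : (n × m) → Matrix m n ℂ, Φ = krausMap E := by
  classical
  obtain ⟨-, -, h1, -, -, h2, -⟩ := sqrt_pinv h
  refine ⟨fun k => Matrix.of fun a i => h.sqrt (i, a) k, ?_⟩
  refine LinearMap.ext fun ρ => ?_
  induction ρ using Matrix.induction_on' with
  | h_zero => simp
  | h_add p q hp hq => rw [map_add, map_add, hp, hq]
  | h_std_basis i j x =>
    have : Matrix.single i j x = x • Matrix.single i j (1 : ℂ) := by simp
    rw [this, map_smul, map_smul]
    congr 1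
    ext a b
    simp only [krausMap_apply, Matrix.sum_apply, mul_single_mul_apply, Matrix.of_apply]
    change choiMatrix Φ (i, a) (j, b) = _
    conv_lhs => rw [← h2]
    rw [Matrix.mul_apply]
    refine Finset.sum_congr rfl fun k _ => ?_
    congr 1
    conv_lhs => rw [← h1]
    rfl

lemma trace_krausMap {κ m n : Type} [Fintype κ] [Fintype n] [Fintype m]
    (E : κ → Matrix m n ℂ) (ρ : Matrix n n ℂ) :
    (krausMap E ρ).trace = ((∑ k, (E k)ᴴ * E k) * ρ).trace := by
  rw [krausMap_apply, trace_sum, Finset.sum_mul, trace_sum]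
  refine Finset.sum_congr rfl fun k _ => ?_
  rw [trace_mul_comm, Matrix.mul_assoc]

lemma dualId_krausMap {κ m n : Type} [Fintype κ] [Fintype n] [DecidableEq n] [Fintype m]
    (E : κ → Matrix m n ℂ) : dualId (krausMap E) = ∑ k, (E k)ᴴ * E k := by
  ext i j
  unfold dualId
  rw [trace_krausMap, Matrix.trace_mul_comm, Matrix.trace_single_mul]
  simp

lemma krausMap_comp {κ τ l m n : Type} [Fintype κ] [Fintype τ] [Fintype n] [Fintype m]
    (E : κ → Matrix l m ℂ) (F : τ → Matrix m n ℂ) :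
    krausMap E ∘ₗ krausMap F = krausMap (fun p : κ × τ => E p.1 * F p.2) := by
  refine LinearMap.ext fun ρ => ?_
  simp only [LinearMap.comp_apply, krausMap_apply, Fintype.sum_prod_type, Matrix.mul_sum,
    Matrix.sum_mul, conjTranspose_mul, Matrix.mul_assoc]

/-- Every operation is its Lüders operation followed by a channel. -/
lemma exists_channel {m n : Type} [Fintype n] [DecidableEq n] [Fintype m] [Nonempty m]
    (Φ : MatMap n m) (h : IsCP Φ) (A : Matrix n n ℂ) (hA : A.PosSemidef) (hAΦ : A = dualId Φ) :
    ∃ E : ((n × m) ⊕ n) → Matrix m n ℂ, (∑ k, (E k)ᴴ * E k = 1) ∧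
      ∀ ρ, krausMap E (hA.sqrt * ρ * hA.sqrt) = Φ ρ := by
  classical
  obtain ⟨K, rfl⟩ := exists_kraus Φ h
  rw [dualId_krausMap] at hAΦ
  obtain ⟨T, P, hS, hT, hP, hSS, hPP, hST, hTS, hPS, hSP⟩ := sqrt_pinv hA
  generalize hA.sqrt = S at *
  have hKP : ∀ k, K k * P = 0 := by
    have h0 : ∑ k, (K k * P)ᴴ * (K k * P) = 0 := by
      calc _ = P * (∑ k, (K k)ᴴ * K k) * P := by
            simp only [conjTranspose_mul, hP, Finset.mul_sum, Finset.sum_mul, Matrix.mul_assoc]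
        _ = 0 := by
            rw [← hAΦ, ← hSS, ← Matrix.mul_assoc, hPS, Matrix.zero_mul, Matrix.zero_mul]
    have h1 : ∑ k, ((K k * P)ᴴ * (K k * P)).trace = 0 := by
      rw [← trace_sum, h0, trace_zero]
    intro k
    rw [Finset.sum_eq_zero_iff_of_nonneg
      (fun k _ => (posSemidef_conjTranspose_mul_self (K k * P)).trace_nonneg)] at h1
    exact trace_conjTranspose_mul_self_eq_zero_iff.1 (h1 k (Finset.mem_univ k))
  have hKQ : ∀ k, K k * T * S = K k := by
    intro k
    calc K k * T * S = K k * (T * S + P) := by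
          rw [Matrix.mul_add, hKP, add_zero, Matrix.mul_assoc]
      _ = K k := by rw [hTS, Matrix.mul_one]
  obtain ⟨e⟩ := ‹Nonempty m›
  refine ⟨Sum.elim (fun k => K k * T) (fun i => Matrix.single e i (1 : ℂ) * P), ?_, fun ρ => ?_⟩
  · rw [Fintype.sum_sum_type]
    simp only [Sum.elim_inl, Sum.elim_inr]
    have e1 : ∑ k, (K k * T)ᴴ * (K k * T) = T * S * (S * T) := by
      calc _ = T * (∑ k, (K k)ᴴ * K k) * T := by
            simp only [conjTranspose_mul, hT, Finset.mul_sum, Finset.sum_mul, Matrix.mul_assoc]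
        _ = _ := by rw [← hAΦ, ← hSS]; simp only [Matrix.mul_assoc]
    have e2 : ∑ i : n, (Matrix.single e i (1 : ℂ) * P)ᴴ * (Matrix.single e i (1 : ℂ) * P) = P := by
      calc _ = P * (∑ i : n, Matrix.single i i (1 : ℂ)) * P := by
            simp only [conjTranspose_mul, hP, Finset.mul_sum, Finset.sum_mul]
            refine Finset.sum_congr rfl fun i _ => ?_
            rw [Matrix.mul_assoc, ← Matrix.mul_assoc _ _ P, conjTranspose_single,
              Matrix.single_mul_single_same, Matrix.mul_assoc]
            simp
        _ = P := by rw [Matrix.sum_single_one, Matrix.mul_one, hPP]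
    rw [e1, e2]
    have q1 : T * S = 1 - P := eq_sub_of_add_eq hTS
    have q2 : S * T = 1 - P := eq_sub_of_add_eq hST
    rw [q1, q2]
    rw [Matrix.sub_mul, Matrix.mul_sub, Matrix.mul_sub, hPP]
    simp
  · rw [krausMap_apply, krausMap_apply, Fintype.sum_sum_type]
    simp only [Sum.elim_inl, Sum.elim_inr]
    have e2 : ∀ i : n, Matrix.single e i (1 : ℂ) * P * (S * ρ * S) *
        (Matrix.single e i (1 : ℂ) * P)ᴴ = 0 := by
      intro i
      have : Matrix.single e i (1 : ℂ) * P * (S * ρ * S)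
          = Matrix.single e i (1 : ℂ) * (P * S) * (ρ * S) := by simp only [Matrix.mul_assoc]
      rw [this, hPS, Matrix.mul_zero, Matrix.zero_mul, Matrix.zero_mul]
    simp only [e2, Finset.sum_const_zero, add_zero]
    refine Finset.sum_congr rfl fun k _ => ?_
    conv_rhs => rw [← hKQ k]
    simp only [conjTranspose_mul, hS, hT, Matrix.mul_assoc]

lemma ptraceL_kronecker {a b : Type} [Fintype a] (X : Matrix a a ℂ) (Y : Matrix b b ℂ) :
    ptraceL (X ⊗ₖ Y) = X.trace • Y := by
  ext i j
  simp [ptraceL, Matrix.trace, Finset.sum_mul]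

lemma ptraceR_kronecker {a b : Type} [Fintype b] (X : Matrix a a ℂ) (Y : Matrix b b ℂ) :
    ptraceR (X ⊗ₖ Y) = Y.trace • X := by
  ext i j
  simp [ptraceR, Matrix.trace, Finset.mul_sum, mul_comm]

lemma ptraceL_add {a b : Type} [Fintype a] (X Y : Matrix (a × b) (a × b) ℂ) :
    ptraceL (X + Y) = ptraceL X + ptraceL Y := by
  ext i j
  simp [ptraceL, Finset.sum_add_distrib]

lemma ptraceR_add {a b : Type} [Fintype b] (X Y : Matrix (a × b) (a × b) ℂ) :
    ptraceR (X + Y) = ptraceR X + ptraceR Y := by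
  ext i j
  simp [ptraceR, Finset.sum_add_distrib]

/-- Tensor product of two Kraus families. -/
def krausTensor {κ τ a b c d : Type} (E : κ → Matrix c a ℂ) (F : τ → Matrix d b ℂ) :
    κ × τ → Matrix (c × d) (a × b) ℂ := fun p => E p.1 ⊗ₖ F p.2

lemma krausTensor_apply {κ τ a b c d : Type} [Fintype κ] [Fintype τ] [Fintype a] [Fintype b]
    (E : κ → Matrix c a ℂ) (F : τ → Matrix d b ℂ) (X : Matrix a a ℂ) (Y : Matrix b b ℂ) :
    krausMap (krausTensor E F) (X ⊗ₖ Y) = krausMap E X ⊗ₖ krausMap F Y := by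
  simp only [krausMap_apply, krausTensor, conjTranspose_kronecker, ← mul_kronecker_mul]
  ext p q
  simp only [Matrix.sum_apply, kroneckerMap_apply, Finset.sum_mul_sum, Fintype.sum_prod_type]

lemma trace_krausMap_of_one {κ m n : Type} [Fintype κ] [Fintype n] [DecidableEq n] [Fintype m]
    (E : κ → Matrix m n ℂ) (hE : ∑ k, (E k)ᴴ * E k = 1) (ρ : Matrix n n ℂ) :
    (krausMap E ρ).trace = ρ.trace := by
  rw [trace_krausMap, hE, Matrix.one_mul]

lemma prod_induction {a b : Type} [Fintype a] [Fintype b] [DecidableEq a] [DecidableEq b]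
    {p : Matrix (a × b) (a × b) ℂ → Prop} (X : Matrix (a × b) (a × b) ℂ)
    (hadd : ∀ X Y, p X → p Y → p (X + Y)) (hk : ∀ X Y, p (X ⊗ₖ Y)) : p X := by
  induction X using Matrix.induction_on' with
  | h_zero => simpa using hk 0 0
  | h_add _ _ h1 h2 => exact hadd _ _ h1 h2
  | h_std_basis i j x =>
    have := hk (Matrix.single i.1 j.1 x) (Matrix.single i.2 j.2 1)
    rwa [single_kronecker_single, mul_one] at this

lemma ptraceL_krausTensor {κ τ a b c d : Type} [Fintype κ] [Fintype τ] [Fintype a] [Fintype b]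
    [Fintype c] [DecidableEq a] [DecidableEq b]
    (E : κ → Matrix c a ℂ) (F : τ → Matrix d b ℂ) (hE : ∑ k, (E k)ᴴ * E k = 1)
    (X : Matrix (a × b) (a × b) ℂ) :
    ptraceL (krausMap (krausTensor E F) X) = krausMap F (ptraceL X) := by
  induction X using prod_induction with
  | hadd X Y h1 h2 => rw [map_add, ptraceL_add, ptraceL_add, map_add, h1, h2]
  | hk X Y =>
    rw [krausTensor_apply, ptraceL_kronecker, ptraceL_kronecker, map_smul,
      trace_krausMap_of_one E hE]

lemma ptraceR_krausTensor {κ τ a b c d : Type} [Fintype κ] [Fintype τ] [Fintype a] [Fintype b]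
    [Fintype d] [DecidableEq a] [DecidableEq b]
    (E : κ → Matrix c a ℂ) (F : τ → Matrix d b ℂ) (hF : ∑ k, (F k)ᴴ * F k = 1)
    (X : Matrix (a × b) (a × b) ℂ) :
    ptraceR (krausMap (krausTensor E F) X) = krausMap E (ptraceR X) := by
  induction X using prod_induction with
  | hadd X Y h1 h2 => rw [map_add, ptraceR_add, ptraceR_add, map_add, h1, h2]
  | hk X Y =>
    rw [krausTensor_apply, ptraceR_kronecker, ptraceR_kronecker, map_smul,
      trace_krausMap_of_one F hF]

lemma trace_krausTensor {κ τ a b c d : Type} [Fintype κ] [Fintype τ] [Fintype a] [Fintype b]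
    [Fintype c] [Fintype d] [DecidableEq a] [DecidableEq b]
    (E : κ → Matrix c a ℂ) (F : τ → Matrix d b ℂ) (hE : ∑ k, (E k)ᴴ * E k = 1)
    (hF : ∑ k, (F k)ᴴ * F k = 1) (X : Matrix (a × b) (a × b) ℂ) :
    (krausMap (krausTensor E F) X).trace = X.trace := by
  induction X using prod_induction with
  | hadd X Y h1 h2 => rw [map_add, trace_add, trace_add, h1, h2]
  | hk X Y =>
    rw [krausTensor_apply, trace_kronecker, trace_kronecker, trace_krausMap_of_one E hE,
      trace_krausMap_of_one F hF]

lemma Instrument.nonempty_out {Θ m n : Type} [Fintype Θ] [Fintype n] [DecidableEq n] [Fintype m]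
    [Nonempty n] (I : Instrument Θ n m) : Nonempty m := by
  by_contra hm
  rw [not_nonempty_iff] at hm
  have := I.tp 1
  rw [trace_one] at this
  simp [Matrix.trace] at this
  exact Fintype.card_ne_zero (α := n) (by exact_mod_cast this.symm)

/-- If the Lüders instruments of the induced POVMs of `I` and `J` are
compatible, then `I` and `J` are compatible. -/
theorem luders_compatible_implies_compatible
    [Fintype Ω] [Fintype Λ] [Fintype dH] [DecidableEq dH] [Fintype dK] [Fintype dV]
    (I : Instrument Ω dH dK) (J : Instrument Λ dH dV)
    (AI : POVM Ω dH) (hAI : ∀ x, AI.elem x = dualId (I.op x))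
    (AJ : POVM Λ dH) (hAJ : ∀ y, AJ.elem y = dualId (J.op y))
    (LI : Instrument Ω dH dH)
    (hLI : ∀ x, ∀ ρ : Matrix dH dH ℂ, LI.op x ρ = (AI.pos x).sqrt * ρ * (AI.pos x).sqrt)
    (LJ : Instrument Λ dH dH)
    (hLJ : ∀ y, ∀ ρ : Matrix dH dH ℂ, LJ.op y ρ = (AJ.pos y).sqrt * ρ * (AJ.pos y).sqrt)
    (h : InsCompatible LI LJ) :
    InsCompatible I J := by
  classical
  obtain ⟨G, hG1, hG2⟩ := h
  rcases isEmpty_or_nonempty dH with hH | hH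
  · have hz : ∀ ρ : Matrix dH dH ℂ, ¬ IsState ρ := by
      rintro ρ ⟨-, h⟩
      simp [Matrix.trace] at h
    refine ⟨⟨fun _ => 0, fun _ => ?_, fun _ ρ hρ => ?_, fun ρ => ?_⟩,
      fun y ρ hρ => (hz ρ hρ).elim, fun y ρ hρ => (hz ρ hρ).elim⟩
    · have : choiMatrix (0 : MatMap dH (dK × dV)) = 0 := by ext p q; simp [choiMatrix]
      unfold IsCP
      rw [this]
      exact PosSemidef.zero
    · simp [Matrix.trace]
    · simp [Matrix.trace]
  have := I.nonempty_out
  have := J.nonempty_out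
  choose E hE1 hE2 using fun x => exists_channel (I.op x) (I.cp x) _ (AI.pos x) (hAI x)
  choose F hF1 hF2 using fun y => exists_channel (J.op y) (J.cp y) _ (AJ.pos y) (hAJ y)
  refine ⟨⟨fun p => krausMap (krausTensor (E p.1) (F p.2)) ∘ₗ G.op p, fun p => ?_,
    fun p ρ hρ => ?_, fun ρ => ?_⟩, fun y ρ hρ => ?_, fun x ρ hρ => ?_⟩
  · obtain ⟨N, hN⟩ := exists_kraus (G.op p) (G.cp p)
    rw [hN, krausMap_comp]
    exact krausMap_cp _
  · rw [LinearMap.comp_apply, trace_krausTensor _ _ (hE1 _) (hF1 _)]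
    exact G.tni p ρ hρ
  · rw [← G.tp ρ]
    simp only [LinearMap.sum_apply, trace_sum, LinearMap.comp_apply,
      trace_krausTensor _ _ (hE1 _) (hF1 _)]
  · simp only [LinearMap.comp_apply, ptraceL_krausTensor _ _ (hE1 _)]
    rw [← map_sum, hG1 y ρ hρ, hLJ, hF2]
  · simp only [LinearMap.comp_apply, ptraceR_krausTensor _ _ (hF1 _)]
    rw [← map_sum, hG2 x ρ hρ, hLI, hE2]
end
end

section
/- Let A ∈ O(Ω,H) be a POVM and J ∈ Ins(Λ,H,K) an instrument. Then A and J are compatible if and only if J is a postprocessing of the Lüders instrument I^A of A (J ⪯ I^A). -/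
open scoped Kronecker ComplexOrder
open Matrix

noncomputable section

variable {Ω Λ dH dK dV dA dA' : Type}

section Helpers

/-- Precomposition with conjugation by a matrix. -/
def conjMap [Fintype dH] (Φ : MatMap dH dK) (S : Matrix dH dH ℂ) : MatMap dH dK where
  toFun ρ := Φ (S * ρ * Sᴴ)
  map_add' a b := by simp [mul_add, add_mul]
  map_smul' c a := by simp

lemma conjMap_apply [Fintype dH] (Φ : MatMap dH dK) (S ρ : Matrix dH dH ℂ) :
    conjMap Φ S ρ = Φ (S * ρ * Sᴴ) := rfl

lemma map_eq_sum [Fintype dH] [DecidableEq dH] (Φ : MatMap dH dK) (ρ : Matrix dH dH ℂ) :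
    Φ ρ = ∑ i, ∑ j, ρ i j • Φ (Matrix.single i j 1) := by
  conv_lhs => rw [matrix_eq_sum_single ρ]
  simp only [map_sum]
  refine Finset.sum_congr rfl fun i _ => Finset.sum_congr rfl fun j _ => ?_
  rw [← map_smul, Matrix.smul_single, smul_eq_mul, mul_one]

lemma choi_conj [Fintype dH] [DecidableEq dH] [Fintype dK] [DecidableEq dK]
    (Φ : MatMap dH dK) (S : Matrix dH dH ℂ) :
    choiMatrix (conjMap Φ S) = (Sᵀ ⊗ₖ (1 : Matrix dK dK ℂ)) * choiMatrix Φ *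
      (Sᵀ ⊗ₖ (1 : Matrix dK dK ℂ))ᴴ := by
  ext ⟨i, k⟩ ⟨j, l⟩
  have h : ∀ a b, (S * (Matrix.single i j 1 : Matrix dH dH ℂ) * Sᴴ : Matrix dH dH ℂ) a b = S a i * star (S b j) := by
    intro a b
    rw [Matrix.mul_apply, Finset.sum_eq_single j]
    · simp
    · intro c _ hc
      simp [Matrix.mul_single_apply_of_ne _ _ _ _ _ hc]
    · simp
  simp only [choiMatrix, conjMap_apply]
  rw [map_eq_sum]
  simp only [h, Matrix.sum_apply, Matrix.smul_apply, Matrix.mul_apply, Fintype.sum_prod_type,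
    Matrix.conjTranspose_apply, Matrix.kroneckerMap_apply, Matrix.transpose_apply,
    Matrix.one_apply, smul_eq_mul]
  simp only [mul_ite, mul_one, mul_zero, ite_mul, zero_mul, Finset.sum_ite_eq, Finset.mem_univ,
    if_true, apply_ite star, star_zero, Finset.sum_mul]
  rw [Finset.sum_comm]
  refine Finset.sum_congr rfl fun a _ => Finset.sum_congr rfl fun b _ => ?_
  simp only [choiMatrix]
  ring

lemma cp_conj [Fintype dH] [DecidableEq dH] [Fintype dK] [DecidableEq dK]
    {Φ : MatMap dH dK} (h : IsCP Φ) (S : Matrix dH dH ℂ) : IsCP (conjMap Φ S) := by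
  unfold IsCP
  rw [choi_conj]
  exact Matrix.PosSemidef.mul_mul_conjTranspose_same h _

lemma choi_inj [Fintype dH] [DecidableEq dH] {Φ Ψ : MatMap dH dK}
    (h : choiMatrix Φ = choiMatrix Ψ) : Φ = Ψ := by
  ext1 ρ
  rw [map_eq_sum Φ, map_eq_sum Ψ]
  refine Finset.sum_congr rfl fun i _ => Finset.sum_congr rfl fun j _ => ?_
  congr 1
  ext k l
  exact congrFun (congrFun h (i, k)) (j, l)

lemma trace_choi [Fintype dH] [DecidableEq dH] [Fintype dK] (Φ : MatMap dH dK) :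
    (choiMatrix Φ).trace = (Φ 1).trace := by
  rw [map_eq_sum Φ 1]
  simp [Matrix.one_apply, Matrix.trace, choiMatrix, Fintype.sum_prod_type, Matrix.sum_apply]
  rw [Finset.sum_comm]

lemma trace_nonneg_of_cp [Fintype dH] [DecidableEq dH] [Fintype dK] [DecidableEq dK]
    {Φ : MatMap dH dK} (h : IsCP Φ) (S : Matrix dH dH ℂ) : 0 ≤ (Φ (S * Sᴴ)).trace := by
  have h1 := Matrix.PosSemidef.trace_nonneg (cp_conj h S)
  rwa [trace_choi, conjMap_apply, mul_one] at h1

/-- Functional calculus through a fixed diagonalization. -/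
def fcal [Fintype dH] [DecidableEq dH] {M : Matrix dH dH ℂ} (h : M.PosSemidef) (f : dH → ℝ) :
    Matrix dH dH ℂ :=
  h.1.eigenvectorUnitary.1 * diagonal (fun i => (f i : ℂ)) *
    (star h.1.eigenvectorUnitary : Matrix dH dH ℂ)

lemma fcal_mul [Fintype dH] [DecidableEq dH] {M : Matrix dH dH ℂ} (h : M.PosSemidef)
    (f g : dH → ℝ) : fcal h f * fcal h g = fcal h (fun i => f i * g i) := by
  unfold fcal
  have hU : (star h.1.eigenvectorUnitary : Matrix dH dH ℂ) * h.1.eigenvectorUnitary.1 = 1 :=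
    Unitary.coe_star_mul_self _
  simp only [Matrix.mul_assoc]
  rw [← Matrix.mul_assoc (star h.1.eigenvectorUnitary : Matrix dH dH ℂ) h.1.eigenvectorUnitary.1,
    hU, Matrix.one_mul, ← Matrix.mul_assoc (diagonal _) (diagonal _), Matrix.diagonal_mul_diagonal]
  simp

lemma fcal_herm [Fintype dH] [DecidableEq dH] {M : Matrix dH dH ℂ} (h : M.PosSemidef)
    (f : dH → ℝ) : (fcal h f)ᴴ = fcal h f := by
  unfold fcal
  simp only [Matrix.conjTranspose_mul, Matrix.diagonal_conjTranspose, Matrix.mul_assoc,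
    Matrix.star_eq_conjTranspose, Matrix.conjTranspose_conjTranspose]
  congr 3
  ext i
  simp

lemma fcal_eig [Fintype dH] [DecidableEq dH] {M : Matrix dH dH ℂ} (h : M.PosSemidef) :
    fcal h h.1.eigenvalues = M := by
  conv_rhs => rw [h.1.spectral_theorem]
  rfl

lemma sqrt_eq_fcal [Fintype dH] [DecidableEq dH] {M : Matrix dH dH ℂ} (h : M.PosSemidef) :
    h.sqrt = fcal h (fun i => Real.sqrt (h.1.eigenvalues i)) := rfl

lemma sqrt_mul_sqrt [Fintype dH] [DecidableEq dH] {M : Matrix dH dH ℂ} (h : M.PosSemidef) :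
    h.sqrt * h.sqrt = M := by
  rw [sqrt_eq_fcal, fcal_mul]
  conv_rhs => rw [← fcal_eig h]
  congr 1
  ext i
  exact Real.mul_self_sqrt (h.eigenvalues_nonneg i)

lemma sqrt_herm [Fintype dH] [DecidableEq dH] {M : Matrix dH dH ℂ} (h : M.PosSemidef) :
    h.sqrtᴴ = h.sqrt := fcal_herm h _

lemma posSemidef_fac [Fintype dH] [DecidableEq dH] {ρ : Matrix dH dH ℂ} (h : ρ.PosSemidef) :
    ∃ S : Matrix dH dH ℂ, ρ = S * Sᴴ := by
  exact ⟨h.sqrt, by rw [sqrt_herm, sqrt_mul_sqrt]⟩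

lemma trace_nonneg_of_cp' [Fintype dH] [DecidableEq dH] [Fintype dK] [DecidableEq dK]
    {Φ : MatMap dH dK} (h : IsCP Φ) {ρ : Matrix dH dH ℂ} (hρ : ρ.PosSemidef) :
    0 ≤ (Φ ρ).trace := by
  obtain ⟨S, rfl⟩ := posSemidef_fac hρ
  exact trace_nonneg_of_cp h S

/-- Trace-nonincreasing is automatic. -/
def mkInstrument [Fintype Ω] [Fintype dH] [DecidableEq dH] [Fintype dK] [DecidableEq dK]
    (op : Ω → MatMap dH dK) (cp : ∀ x, IsCP (op x)) (tp : IsTP (∑ x, op x)) :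
    Instrument Ω dH dK where
  op := op
  cp := cp
  tp := tp
  tni x ρ hρ := by
    rw [← tp ρ, LinearMap.sum_apply, Matrix.trace_sum]
    exact Finset.single_le_sum (f := fun x => (op x ρ).trace)
      (fun y _ => trace_nonneg_of_cp' (cp y) hρ) (Finset.mem_univ x)

lemma trace_dual [Fintype dH] [DecidableEq dH] [Fintype dK]
    (Φ : MatMap dH dK) (ρ : Matrix dH dH ℂ) : (Φ ρ).trace = (dualId Φ * ρ).trace := by
  rw [map_eq_sum Φ ρ]
  simp only [Matrix.trace_sum, Matrix.trace_smul, dualId, smul_eq_mul]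
  rw [Finset.sum_comm]
  simp only [Matrix.trace, Matrix.diag, Matrix.mul_apply]
  refine Finset.sum_congr rfl fun i _ => Finset.sum_congr rfl fun j _ => ?_
  exact mul_comm _ _

/-- A CP map with no weight on the complement of `P` absorbs compression by `P`. -/
lemma conj_absorb [Fintype dH] [DecidableEq dH] [Fintype dK] [DecidableEq dK]
    {Φ : MatMap dH dK} (h : IsCP Φ) (P : Matrix dH dH ℂ)
    (h0 : (Φ ((1 - P) * (1 - P)ᴴ)).trace = 0) : conjMap Φ P = Φ := by
  apply choi_inj
  have hz : choiMatrix (conjMap Φ (1 - P)) = 0 := by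
    rw [← Matrix.PosSemidef.trace_eq_zero_iff (cp_conj h _), trace_choi, conjMap_apply, mul_one, h0]
  rw [choi_conj] at hz
  rw [choi_conj]
  obtain ⟨B, hB⟩ := posSemidef_fac h
  have hM : ((1 - P)ᵀ ⊗ₖ (1 : Matrix dK dK ℂ)) = 1 - (Pᵀ ⊗ₖ (1 : Matrix dK dK ℂ)) := by
    ext ⟨i, k⟩ ⟨j, l⟩
    simp only [Matrix.kroneckerMap_apply, Matrix.sub_apply, Matrix.transpose_apply,
      Matrix.one_apply, Prod.mk.injEq]
    by_cases h1 : i = j <;> by_cases h2 : k = l <;> simp [h1, h2, eq_comm]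
  rw [hM] at hz
  set N := (Pᵀ ⊗ₖ (1 : Matrix dK dK ℂ))
  rw [hB] at hz ⊢
  have h2 : (1 - N) * B = 0 := by
    rw [← Matrix.self_mul_conjTranspose_eq_zero, Matrix.conjTranspose_mul]
    simpa only [Matrix.mul_assoc] using hz
  have h3 : N * B = B := by
    rw [sub_mul, one_mul, sub_eq_zero] at h2
    exact h2.symm
  calc N * (B * Bᴴ) * Nᴴ = (N * B) * (N * B)ᴴ := by
        rw [Matrix.conjTranspose_mul]; simp only [Matrix.mul_assoc]
    _ = B * Bᴴ := by rw [h3]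

lemma exists_pinv [Fintype dH] [DecidableEq dH] {M : Matrix dH dH ℂ} (h : M.PosSemidef) :
    ∃ T P : Matrix dH dH ℂ, Tᴴ = T ∧ Pᴴ = P ∧ P * P = P ∧ T * h.sqrt = P ∧ h.sqrt * T = P ∧
      P * h.sqrt = h.sqrt := by
  refine ⟨fcal h (fun i => (Real.sqrt (h.1.eigenvalues i))⁻¹),
    fcal h (fun i => (Real.sqrt (h.1.eigenvalues i))⁻¹ * Real.sqrt (h.1.eigenvalues i)),
    fcal_herm _ _, fcal_herm _ _, ?_, ?_, ?_, ?_⟩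
  all_goals
    try rw [sqrt_eq_fcal]
    rw [fcal_mul]
  all_goals
    congr 1
    ext i
    by_cases h0 : Real.sqrt (h.1.eigenvalues i) = 0
    · simp [h0]
    · field_simp

/-- Discard and prepare the basis state `k`. -/
def prepMap [Fintype dH] [DecidableEq dK] (k : dK) : MatMap dH dK where
  toFun ρ := ρ.trace • Matrix.single k k 1
  map_add' a b := by rw [Matrix.trace_add, add_smul]
  map_smul' c a := by rw [Matrix.trace_smul, smul_eq_mul, mul_smul]; rfl

lemma prepMap_apply [Fintype dH] [DecidableEq dK] (k : dK) (ρ : Matrix dH dH ℂ) :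
    prepMap k ρ = ρ.trace • Matrix.single k k 1 := rfl

lemma prep_cp [Fintype dH] [DecidableEq dH] [Fintype dK] [DecidableEq dK] (k : dK) :
    IsCP (prepMap k : MatMap dH dK) := by
  have : choiMatrix (prepMap k : MatMap dH dK) =
      diagonal (fun p : dH × dK => if p.2 = k then (1 : ℂ) else 0) := by
    ext ⟨i, a⟩ ⟨j, b⟩
    simp only [choiMatrix, prepMap_apply, Matrix.smul_apply, Matrix.single_apply, smul_eq_mul,
      Matrix.diagonal_apply, Prod.mk.injEq]
    by_cases hij : i = j
    · subst hij
      rw [Matrix.trace_single_eq_same]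
      by_cases h1 : k = a <;> by_cases h2 : k = b
      · subst h1; subst h2; simp
      · subst h1; simp [h2]
      · subst h2; simp [h1, eq_comm]
      · simp [h1, Ne.symm h1]
    · rw [Matrix.trace_single_eq_of_ne _ _ _ hij]
      simp [hij]
  unfold IsCP
  rw [this]
  refine Matrix.PosSemidef.diagonal fun p => ?_
  show (0 : ℂ) ≤ if p.2 = k then (1 : ℂ) else 0
  split_ifs
  · exact zero_le_one
  · exact le_rfl

lemma cp_add [Fintype dH] [DecidableEq dH] [Fintype dK] {Φ Ψ : MatMap dH dK}
    (h : IsCP Φ) (h' : IsCP Ψ) : IsCP (Φ + Ψ) := Matrix.PosSemidef.add h h'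

lemma cp_zero [Fintype dH] [DecidableEq dH] [Fintype dK] : IsCP (0 : MatMap dH dK) :=
  Matrix.PosSemidef.zero

lemma backward_dir
    [Fintype Ω] [Fintype Λ] [Fintype dH] [DecidableEq dH] [Fintype dK] [DecidableEq dK]
    (A : POVM Ω dH) (J : Instrument Λ dH dK)
    (L : Instrument Ω dH dH)
    (hL : ∀ x, ∀ ρ : Matrix dH dH ℂ, L.op x ρ = (A.pos x).sqrt * ρ * (A.pos x).sqrt)
    (hJ : Postprocessed J L) : POVMInsCompatible A J := by
  obtain ⟨R, hR⟩ := hJ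
  have hc : ∀ x y, (R x).op y ∘ₗ L.op x = conjMap ((R x).op y) (A.pos x).sqrt := by
    intro x y
    ext1 ρ
    rw [LinearMap.comp_apply, hL, conjMap_apply, sqrt_herm]
  have ht : ∀ x ρ, ∑ y, ((R x).op y (L.op x ρ)).trace = (L.op x ρ).trace := by
    intro x ρ
    rw [← (R x).tp, LinearMap.sum_apply, Matrix.trace_sum]
  refine ⟨mkInstrument (fun p => (R p.1).op p.2 ∘ₗ L.op p.1) ?_ ?_, ?_, ?_⟩
  · intro p
    rw [hc]
    exact cp_conj ((R p.1).cp p.2) _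
  · intro ρ
    rw [LinearMap.sum_apply, Matrix.trace_sum, Fintype.sum_prod_type]
    simp only [LinearMap.comp_apply, ht]
    rw [← L.tp ρ, LinearMap.sum_apply, Matrix.trace_sum]
  · intro y
    exact (hR y).symm
  · intro x
    ext i j
    rw [Matrix.sum_apply]
    refine (ht x (Matrix.single j i 1)).trans ?_
    rw [hL, Matrix.trace_mul_comm, ← Matrix.mul_assoc, sqrt_mul_sqrt]
    simp [Matrix.trace_mul_single]

lemma forward_dir
    [Fintype Ω] [Fintype Λ] [Fintype dH] [DecidableEq dH] [Fintype dK] [DecidableEq dK]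
    (A : POVM Ω dH) (J : Instrument Λ dH dK)
    (L : Instrument Ω dH dH)
    (hL : ∀ x, ∀ ρ : Matrix dH dH ℂ, L.op x ρ = (A.pos x).sqrt * ρ * (A.pos x).sqrt)
    (hG : POVMInsCompatible A J) : Postprocessed J L := by
  classical
  obtain ⟨G, hG1, hG2⟩ := hG
  rcases isEmpty_or_nonempty dH with hE | hE
  · refine ⟨fun _ => ⟨J.op, J.cp, J.tni, J.tp⟩, fun y => ?_⟩
    ext1 ρ
    rw [Subsingleton.elim ρ 0, map_zero, map_zero]
  obtain ⟨i0⟩ := hE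
  have hone := J.tp (Matrix.single i0 i0 1)
  rw [Matrix.trace_single_eq_same] at hone
  have hK : Nonempty dK := by
    by_contra hn
    rw [not_nonempty_iff] at hn
    simp [Matrix.trace] at hone
  have hΛ : Nonempty Λ := by
    by_contra hn
    rw [not_nonempty_iff] at hn
    simp at hone
  obtain ⟨k⟩ := hK
  obtain ⟨y0⟩ := hΛ
  have htr : ∀ x ρ, ∑ y, (G.op (x, y) ρ).trace = (A.elem x * ρ).trace := by
    intro x ρ
    simp only [trace_dual]
    rw [← Matrix.trace_sum, ← Finset.sum_mul, hG2]
  choose T P hT hP hPP hTS hST hPS using fun x => exists_pinv (A.pos x)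
  have hQP : ∀ x, (1 - P x)ᴴ = 1 - P x := fun x => by
    rw [Matrix.conjTranspose_sub, Matrix.conjTranspose_one, hP]
  have hQQ : ∀ x, (1 - P x) * (1 - P x) = 1 - P x := fun x => by
    rw [mul_sub, sub_mul, sub_mul, hPP]; simp
  have hQS : ∀ x, (1 - P x) * (A.pos x).sqrt = 0 := fun x => by
    rw [sub_mul, hPS, one_mul, sub_self]
  have hAQ : ∀ x, (1 - P x) * A.elem x = 0 := fun x => by
    rw [← sqrt_mul_sqrt (A.pos x), ← Matrix.mul_assoc, hQS, zero_mul]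
  have habs : ∀ x y, conjMap (G.op (x, y)) (P x) = G.op (x, y) := by
    intro x y
    refine conj_absorb (G.cp _) _ ?_
    have hs := htr x ((1 - P x) * (1 - P x)ᴴ)
    rw [hQP, hQQ, Matrix.trace_mul_comm, hAQ, Matrix.trace_zero] at hs
    have hn : ∀ y ∈ Finset.univ, 0 ≤ (G.op (x, y) (1 - P x)).trace := by
      intro y _
      have := trace_nonneg_of_cp (G.cp (x, y)) (1 - P x)
      rwa [hQP, hQQ] at this
    rw [hQP, hQQ]
    exact (Finset.sum_eq_zero_iff_of_nonneg hn).mp hs y (Finset.mem_univ y)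
  refine ⟨fun x => mkInstrument (fun y => conjMap (G.op (x, y)) (T x) +
    if y = y0 then conjMap (prepMap k) (1 - P x) else 0) ?_ ?_, ?_⟩
  · intro y
    refine cp_add (cp_conj (G.cp _) _) ?_
    split_ifs
    · exact cp_conj (prep_cp k) _
    · exact cp_zero
  · intro ρ
    rw [Finset.sum_add_distrib, Finset.sum_ite_eq' Finset.univ y0, if_pos (Finset.mem_univ y0),
      LinearMap.add_apply, Matrix.trace_add, LinearMap.sum_apply, Matrix.trace_sum]
    simp only [conjMap_apply, htr, prepMap_apply, Matrix.trace_smul, Matrix.trace_single_eq_same,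
      hQP, hT, smul_eq_mul, mul_one]
    have e1 : (A.elem x * (T x * ρ * T x)).trace = (P x * ρ).trace := by
      have : T x * A.elem x * T x = P x := by
        rw [← sqrt_mul_sqrt (A.pos x), ← Matrix.mul_assoc, hTS, Matrix.mul_assoc, hST, hPP]
      rw [← this, ← Matrix.mul_assoc, Matrix.trace_mul_comm]
      simp only [Matrix.mul_assoc]
    have e2 : ((1 - P x) * ρ * (1 - P x)).trace = ((1 - P x) * ρ).trace := by
      rw [Matrix.trace_mul_comm, ← Matrix.mul_assoc, hQQ]
    rw [e1, e2, ← Matrix.trace_add, ← add_mul]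
    simp
  · intro y
    rw [← hG1 y]
    refine Finset.sum_congr rfl fun x _ => ?_
    ext1 ρ
    rw [LinearMap.comp_apply, hL]
    simp only [mkInstrument, LinearMap.add_apply]
    have e1 : conjMap (G.op (x, y)) (T x) ((A.pos x).sqrt * ρ * (A.pos x).sqrt)
        = G.op (x, y) ρ := by
      conv_rhs => rw [← habs x y]
      rw [conjMap_apply, conjMap_apply, hT, hP]
      congr 1
      calc T x * ((A.pos x).sqrt * ρ * (A.pos x).sqrt) * T x
          = (T x * (A.pos x).sqrt) * ρ * ((A.pos x).sqrt * T x) := by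
            simp only [Matrix.mul_assoc]
        _ = P x * ρ * P x := by rw [hTS, hST]
    have e2 : conjMap (prepMap k : MatMap dH dK) (1 - P x)
        ((A.pos x).sqrt * ρ * (A.pos x).sqrt) = 0 := by
      rw [conjMap_apply, ← Matrix.mul_assoc, ← Matrix.mul_assoc, hQS]
      simp
    rw [e1]
    split_ifs
    · rw [e2, add_zero]
    · simp

end Helpers

/-- A POVM `A` and an instrument `J` are compatible if and only if `J` is a
postprocessing of the Lüders instrument of `A`. -/
theorem povm_instrument_compatible_iff_postprocessing_of_luders
    [Fintype Ω] [Fintype Λ] [Fintype dH] [DecidableEq dH] [Fintype dK] [DecidableEq dK]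
    (A : POVM Ω dH) (J : Instrument Λ dH dK)
    (L : Instrument Ω dH dH)
    (hL : ∀ x, ∀ ρ : Matrix dH dH ℂ, L.op x ρ = (A.pos x).sqrt * ρ * (A.pos x).sqrt) :
    POVMInsCompatible A J ↔ Postprocessed J L := by
  exact ⟨forward_dir A J L hL, backward_dir A J L hL⟩
end
end

section
/- Two measure-and-prepare instruments I ∈ Ins(Ω,H,K) and J ∈ Ins(Λ,H,V) are compatible if and only if their induced POVMs A^I and A^J are compatible. -/
open scoped Kronecker ComplexOrder
open Matrix

noncomputable section

variable {Ω Λ dH dK dV dA dA' : Type}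

lemma trace_mul_psd_nonneg [Fintype dH] {M N : Matrix dH dH ℂ}
    (hM : M.PosSemidef) (hN : N.PosSemidef) : 0 ≤ (M * N).trace := by
  classical
  open scoped MatrixOrder in
  obtain ⟨b, rfl⟩ := CStarAlgebra.nonneg_iff_eq_star_mul_self.mp hN.nonneg
  rw [star_eq_conjTranspose, ← Matrix.mul_assoc, Matrix.trace_mul_comm, ← Matrix.mul_assoc]
  exact (hM.mul_mul_conjTranspose_same b).trace_nonneg

/-- A Hermitian matrix is determined by its expectation values on states. -/
lemma eq_of_states [Fintype dH] [DecidableEq dH] {M N : Matrix dH dH ℂ}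
    (hM : M.IsHermitian) (hN : N.IsHermitian)
    (h : ∀ ρ, IsState ρ → (M * ρ).trace = (N * ρ).trace) : M = N := by
  have hpsd : ∀ ρ : Matrix dH dH ℂ, ρ.PosSemidef → ((M - N) * ρ).trace = 0 := by
    intro ρ hρ
    by_cases ht : ρ.trace = 0
    · rw [hρ.trace_eq_zero_iff.mp ht]; simp
    · have hs : IsState ((ρ.trace)⁻¹ • ρ) := by
        refine ⟨hρ.smul (inv_nonneg.mpr hρ.trace_nonneg), ?_⟩
        simp [Matrix.trace_smul, ht]
      have := h _ hs
      simp only [Matrix.mul_smul, Matrix.trace_smul, smul_eq_mul] at this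
      have := mul_left_cancel₀ (inv_ne_zero ht) this
      rw [Matrix.sub_mul, Matrix.trace_sub, this, sub_self]
  set D := M - N with hD
  have hDh : Dᴴ = D := (hM.sub hN)
  have h1 := hpsd _ (posSemidef_conjTranspose_mul_self (1 + D))
  have h2 := hpsd _ (posSemidef_conjTranspose_mul_self (1 - D))
  simp only [conjTranspose_add, conjTranspose_sub, conjTranspose_one, hDh] at h1 h2
  have e : D * ((1 + D) * (1 + D)) - D * ((1 - D) * (1 - D)) = (4 : ℂ) • (D * D) := by
    rw [show (4 : ℂ) = 1 + 1 + 1 + 1 by norm_num]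
    simp only [add_smul, one_smul]
    noncomm_ring
  have h3 : ((4 : ℂ) • (D * D)).trace = 0 := by rw [← e, Matrix.trace_sub, h1, h2, sub_self]
  rw [Matrix.trace_smul, smul_eq_mul] at h3
  have h4 : (Dᴴ * D).trace = 0 := by rw [hDh]; simpa using h3
  exact sub_eq_zero.mp (Matrix.trace_conjTranspose_mul_self_eq_zero_iff.mp h4)

lemma trace_dualId_mul [Fintype dH] [DecidableEq dH] [Fintype dK] (Φ : MatMap dH dK)
    (ρ : Matrix dH dH ℂ) : (dualId Φ * ρ).trace = (Φ ρ).trace := by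
  conv_rhs => rw [matrix_eq_sum_single ρ]
  simp only [map_sum, Matrix.trace_sum]
  rw [Matrix.trace, Finset.sum_comm]
  refine Finset.sum_congr rfl fun i _ => ?_
  rw [Matrix.diag_apply, Matrix.mul_apply]
  refine Finset.sum_congr rfl fun j _ => ?_
  have : Matrix.single j i (ρ j i) = ρ j i • Matrix.single j i (1 : ℂ) := by simp
  rw [this, map_smul, Matrix.trace_smul, dualId, smul_eq_mul, mul_comm]

lemma dualId_posSemidef [Fintype dH] [DecidableEq dH] [Fintype dK] {Φ : MatMap dH dK}
    (h : IsCP Φ) : (dualId Φ).PosSemidef := by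
  have : dualId Φ = ∑ k, ((choiMatrix Φ).submatrix (fun i => (i, k)) (fun i => (i, k)))ᵀ := by
    ext i j
    simp [dualId, choiMatrix, Matrix.sum_apply, Matrix.trace]
  rw [this]
  exact posSemidef_sum _ fun k _ => (Matrix.PosSemidef.submatrix h _).transpose

lemma trace_ptraceL [Fintype dA] [Fintype dK] (M : Matrix (dA × dK) (dA × dK) ℂ) :
    (ptraceL M).trace = M.trace := by
  simp only [Matrix.trace, Matrix.diag_apply, ptraceL, Fintype.sum_prod_type]
  exact Finset.sum_comm

lemma trace_ptraceR [Fintype dV] [Fintype dK] (M : Matrix (dK × dV) (dK × dV) ℂ) :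
    (ptraceR M).trace = M.trace := by
  simp only [Matrix.trace, Matrix.diag_apply, ptraceR, Fintype.sum_prod_type]

/-- The measure-and-prepare instrument of a POVM and a family of states. -/
def mpInstrument [Fintype Ω] [Fintype dH] [DecidableEq dH] [Fintype dK]
    (A : POVM Ω dH) (τ : Ω → Matrix dK dK ℂ) (hτ : ∀ x, IsState (τ x)) :
    Instrument Ω dH dK where
  op x := ((Matrix.traceLinearMap dH ℂ ℂ) ∘ₗ (LinearMap.mulLeft ℂ (A.elem x))).smulRight (τ x)
  cp x := by
    classical
    have : choiMatrix (((Matrix.traceLinearMap dH ℂ ℂ) ∘ₗ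
        (LinearMap.mulLeft ℂ (A.elem x))).smulRight (τ x)) = (A.elem x)ᵀ ⊗ₖ τ x := by
      ext ⟨i, k⟩ ⟨j, l⟩
      simp [choiMatrix, Matrix.trace_mul_single]
    rw [IsCP, this]
    exact (A.pos x).transpose.kronecker (hτ x).1
  tni x ρ hρ := by
    have h1 : ρ.trace = ∑ z, (A.elem z * ρ).trace := by
      rw [← Matrix.trace_sum, ← Finset.sum_mul, A.sum_eq, one_mul]
    simp only [LinearMap.smulRight_apply, LinearMap.comp_apply, LinearMap.mulLeft_apply,
      Matrix.traceLinearMap_apply, Matrix.trace_smul, (hτ x).2, smul_eq_mul, mul_one]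
    rw [h1]
    exact Finset.single_le_sum (f := fun z => (A.elem z * ρ).trace)
      (fun z _ => trace_mul_psd_nonneg (A.pos z) hρ) (Finset.mem_univ x)
  tp ρ := by
    have h1 : ρ.trace = ∑ z, (A.elem z * ρ).trace := by
      rw [← Matrix.trace_sum, ← Finset.sum_mul, A.sum_eq, one_mul]
    rw [h1, LinearMap.sum_apply, Matrix.trace_sum]
    refine Finset.sum_congr rfl fun x _ => ?_
    simp [(hτ x).2]

lemma mpInstrument_op [Fintype Ω] [Fintype dH] [DecidableEq dH] [Fintype dK]
    (A : POVM Ω dH) (τ : Ω → Matrix dK dK ℂ) (hτ : ∀ x, IsState (τ x)) (x : Ω)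
    (ρ : Matrix dH dH ℂ) :
    (mpInstrument A τ hτ).op x ρ = (A.elem x * ρ).trace • τ x := by
  simp [mpInstrument]

/-- Two measure-and-prepare instruments are compatible if and only if
their induced (i.e. measured) POVMs are compatible. -/
theorem map_instruments_compatible_iff_povms_compatible
    [Fintype Ω] [Fintype Λ] [Fintype dH] [DecidableEq dH] [Fintype dK] [Fintype dV]
    (I : Instrument Ω dH dK) (J : Instrument Λ dH dV)
    (A : POVM Ω dH) (σ : Ω → Matrix dK dK ℂ) (hσ : ∀ x, IsState (σ x))
    (hI : ∀ x, ∀ ρ : Matrix dH dH ℂ, I.op x ρ = ((A.elem x * ρ).trace) • σ x)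
    (B : POVM Λ dH) (ξ : Λ → Matrix dV dV ℂ) (hξ : ∀ y, IsState (ξ y))
    (hJ : ∀ y, ∀ ρ : Matrix dH dH ℂ, J.op y ρ = ((B.elem y * ρ).trace) • ξ y) :
    InsCompatible I J ↔ POVMCompatible A B := by
  constructor
  · rintro ⟨G, hGJ, hGI⟩
    have hpos : ∀ z, (dualId (G.op z)).PosSemidef := fun z => dualId_posSemidef (G.cp z)
    refine ⟨⟨fun z => dualId (G.op z), hpos, ?_⟩, fun y => ?_, fun x => ?_⟩
    · refine eq_of_states (posSemidef_sum _ fun z _ => hpos z).1 isHermitian_one fun ρ _ => ?_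
      rw [Finset.sum_mul, Matrix.trace_sum]
      simp only [trace_dualId_mul]
      rw [← Matrix.trace_sum, ← LinearMap.sum_apply, G.tp ρ, one_mul]
    · refine eq_of_states (posSemidef_sum _ fun x _ => hpos (x, y)).1 (B.pos y).1 fun ρ hρ => ?_
      have := congrArg Matrix.trace (hGJ y ρ hρ)
      rw [hJ, Matrix.trace_smul, (hξ y).2, Matrix.trace_sum, smul_eq_mul, mul_one] at this
      simp only [trace_ptraceL] at this
      rw [Finset.sum_mul, Matrix.trace_sum, ← this]
      simp only [trace_dualId_mul]
    · refine eq_of_states (posSemidef_sum _ fun y _ => hpos (x, y)).1 (A.pos x).1 fun ρ hρ => ?_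
      have := congrArg Matrix.trace (hGI x ρ hρ)
      rw [hI, Matrix.trace_smul, (hσ x).2, Matrix.trace_sum, smul_eq_mul, mul_one] at this
      simp only [trace_ptraceR] at this
      rw [Finset.sum_mul, Matrix.trace_sum, ← this]
      simp only [trace_dualId_mul]
  · rintro ⟨G, hGB, hGA⟩
    classical
    have hτ : ∀ z : Ω × Λ, IsState (σ z.1 ⊗ₖ ξ z.2) := fun z =>
      ⟨(hσ z.1).1.kronecker (hξ z.2).1, by
        rw [Matrix.trace_kronecker, (hσ z.1).2, (hξ z.2).2, one_mul]⟩
    refine ⟨mpInstrument G _ hτ, fun y ρ _ => ?_, fun x ρ _ => ?_⟩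
    · have hp : ∀ x, ptraceL ((mpInstrument G _ hτ).op (x, y) ρ)
          = (G.elem (x, y) * ρ).trace • ξ y := by
        intro x
        have ht : ∑ a, σ x a a = 1 := (hσ x).2
        ext i j
        simp only [mpInstrument_op, ptraceL, Matrix.smul_apply, Matrix.kroneckerMap_apply,
          smul_eq_mul]
        rw [← Finset.mul_sum, ← Finset.sum_mul, ht, one_mul]
      simp only [hp]
      rw [hJ, ← Finset.sum_smul, ← Matrix.trace_sum, ← Finset.sum_mul, hGB]
    · have hp : ∀ y, ptraceR ((mpInstrument G _ hτ).op (x, y) ρ)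
          = (G.elem (x, y) * ρ).trace • σ x := by
        intro y
        have ht : ∑ a, ξ y a a = 1 := (hξ y).2
        ext i j
        simp only [mpInstrument_op, ptraceR, Matrix.smul_apply, Matrix.kroneckerMap_apply,
          smul_eq_mul]
        rw [← Finset.mul_sum, ← Finset.mul_sum, ht, mul_one]
      simp only [hp]
      rw [hI, ← Finset.sum_smul, ← Matrix.trace_sum, ← Finset.sum_mul, hGA]
end
end

section
/- Let I ∈ Ins(Ω,H,K) be an indecomposable instrument, I_x(ρ) = K_x ρ K_x* with Kraus operators K_x: H → K. Then I admits a dilation (H_A, W, E), with H_A = ℂ^{|Ω|} having orthonormal basis (φ_x)_{x∈Ω}, W: H → H_A⊗K defined by Wψ = Σ_{x∈Ω} φ_x ⊗ K_x ψ, and E(x) = |φ_x⟩⟨φ_x|, such that the complementary instrument I^C ∈ Ins(Ω,H,H_A) relative to this dilation is the measure-and-prepare instrument I^C_x(ρ) = tr[A^I(x)ρ] |φ_x⟩⟨φ_x| for all x ∈ Ω and all states ρ. -/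
open scoped Kronecker ComplexOrder
open Matrix

noncomputable section

variable {Ω Λ dH dK dV dA dA' : Type}

theorem sqrt_of_idem_aux {n : Type} [Fintype n] [DecidableEq n] {A : Matrix n n ℂ}
    (hA : A.PosSemidef) (h : A * A = A) : hA.sqrt = A := by
  set U : Matrix n n ℂ := hA.1.eigenvectorUnitary.1 with hU
  have hUU : star U * U = 1 := Unitary.coe_star_mul_self hA.1.eigenvectorUnitary
  have hspec : A = U * diagonal ((↑) ∘ hA.1.eigenvalues) * star U := by
    have := hA.1.spectral_theorem
    rw [Unitary.conjStarAlgAut_apply] at this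
    exact this
  have hD : (diagonal ((↑) ∘ hA.1.eigenvalues) : Matrix n n ℂ) = star U * A * U := by
    generalize (diagonal ((↑) ∘ hA.1.eigenvalues) : Matrix n n ℂ) = D at hspec
    rw [hspec]
    calc D = 1 * D * 1 := by simp
      _ = _ := by rw [← hUU]; simp only [Matrix.mul_assoc]
  have hUU' : U * star U = 1 := Unitary.coe_mul_star_self hA.1.eigenvectorUnitary
  have hDD : (diagonal ((↑) ∘ hA.1.eigenvalues) : Matrix n n ℂ) *
      diagonal ((↑) ∘ hA.1.eigenvalues) = diagonal ((↑) ∘ hA.1.eigenvalues) := by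
    rw [hD]
    calc star U * A * U * (star U * A * U) = star U * A * (U * star U) * A * U := by
          simp only [Matrix.mul_assoc]
      _ = star U * (A * A) * U := by rw [hUU']; simp only [Matrix.mul_assoc, Matrix.one_mul]
      _ = _ := by rw [h]
  have hd : ∀ i, Real.sqrt (hA.1.eigenvalues i) = hA.1.eigenvalues i := by
    intro i
    rw [diagonal_mul_diagonal] at hDD
    have h1 := congrFun (diagonal_injective hDD) i
    simp only [Function.comp_apply] at h1
    have h2 : hA.1.eigenvalues i * hA.1.eigenvalues i = hA.1.eigenvalues i := by
      exact_mod_cast h1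
    conv_lhs => rw [← h2]
    exact Real.sqrt_mul_self (hA.eigenvalues_nonneg i)
  have hfun : Real.sqrt ∘ hA.1.eigenvalues = hA.1.eigenvalues := funext hd
  unfold Matrix.PosSemidef.sqrt
  rw [hfun]
  exact hspec.symm

/-- An indecomposable instrument `I_x(ρ) = K_x ρ K_x*` admits the dilation
`(ℂ^Ω, W, E)` with `Wψ = ∑ x, φ_x ⊗ K_x ψ` and `E(x) = |φ_x⟩⟨φ_x|`, whose complementary
instrument is the measure-and-prepare instrument
`I^C_x(ρ) = tr[A^I(x)ρ] |φ_x⟩⟨φ_x|`. -/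
theorem indecomposable_complementary_is_measure_and_prepare
    [Fintype Ω] [DecidableEq Ω] [Fintype dH] [DecidableEq dH] [Fintype dK] [DecidableEq dK]
    (I : Instrument Ω dH dK) (Kr : Ω → Matrix dK dH ℂ)
    (hI : ∀ x, ∀ ρ : Matrix dH dH ℂ, I.op x ρ = Kr x * ρ * (Kr x)ᴴ)
    (W : Matrix (Ω × dK) dH ℂ)
    (hW : W = Matrix.of fun p i => Kr p.1 p.2 i) :
    ∃ E : POVM Ω Ω,
      (∀ x, E.elem x = Matrix.single x x 1) ∧
      IsDilation I W E ∧
      ∀ x, ∀ ρ : Matrix dH dH ℂ, IsState ρ →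
        ptraceR (((E.pos x).sqrt ⊗ₖ (1 : Matrix dK dK ℂ)) * (W * ρ * Wᴴ) *
            ((E.pos x).sqrt ⊗ₖ (1 : Matrix dK dK ℂ))) =
          ((dualId (I.op x) * ρ).trace) • Matrix.single x x 1 := by
  subst hW
  have hpos : ∀ x : Ω, (Matrix.single x x (1 : ℂ)).PosSemidef := by
    intro x
    rw [← Matrix.diagonal_single]
    refine Matrix.PosSemidef.diagonal ?_
    intro i
    by_cases h : i = x <;> simp [Pi.single_apply, h]
  refine ⟨⟨fun x => Matrix.single x x 1, hpos, ?_⟩, fun x => rfl, ⟨?_, ?_⟩, ?_⟩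
  · exact Matrix.sum_single_one
  · ext i j
    have h := I.tp (Matrix.single j i 1)
    simp only [LinearMap.sum_apply, hI, Matrix.trace_sum] at h
    have h2 : (Matrix.single j i (1 : ℂ)).trace = (1 : Matrix dH dH ℂ) i j := by
      by_cases hij : i = j
      · subst hij; simp
      · simp [Matrix.trace_single_eq_of_ne _ _ _ (Ne.symm hij), hij]
    rw [← h2, ← h]
    simp only [Matrix.mul_apply, Fintype.sum_prod_type, Matrix.trace, Matrix.diag,
      Matrix.conjTranspose_apply, Matrix.of_apply]
    refine Finset.sum_congr rfl fun x _ => Finset.sum_congr rfl fun k _ => ?_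
    simp [Matrix.single_apply, ite_and, mul_comm]
  · intro x ρ _
    rw [hI]
    ext k l
    simp [ptraceL, Matrix.mul_apply, Fintype.sum_prod_type, Matrix.single_apply,
      Matrix.one_apply, ite_and]
  · intro x ρ _
    rw [sqrt_of_idem_aux (hpos x) (by simp)]
    have hdual : (dualId (I.op x) * ρ).trace = (Kr x * ρ * (Kr x)ᴴ).trace := by
      have : dualId (I.op x) = (Kr x)ᴴ * Kr x := by
        ext i j
        simp only [dualId, hI]
        simp [Matrix.mul_apply, Matrix.trace, Matrix.single_apply, ite_and, mul_comm]
      rw [this, Matrix.mul_assoc, Matrix.trace_mul_comm]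
    rw [hdual]
    ext a b
    by_cases ha : a = x <;> by_cases hb : b = x <;>
    simp [ptraceR, Matrix.mul_apply, Fintype.sum_prod_type, Matrix.single_apply,
      Matrix.one_apply, ite_and, Matrix.trace, ha, hb, Ne.symm]
end
end
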